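/- arXiv:1707.03492 — 2 statements merged into one kernel-verified Lean document; each statement's English description precedes it below -/
import Mathlib

section
/- (Uniqueness of the Primary Chain) In the robot model on a line, fix a time t₀ and suppose that i₀ = 0, i₁, …, i_k = n and i′₀ = 0, i′₁, …, i′_m = n are two sequences of robots, each satisfying, for every t ≥ t₀ and every consecutive pair in the sequence, that r(i_j, t) = x t i_{j+1} and l(i_{j+1}, t) = x t i_j (respectively for the primed sequence). Then k = m and x t i_j = x t i′_j for every t ≥ t₀ and every 0 ≤ j ≤ k; i.e., the primary chain is unique up to robots at identical positions. -/
open Filter Topology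

/-- Position of the farthest left robot visible from robot `i` at time `t`
(visibility radius `V`). -/
noncomputable def lpos {n : ℕ} (V : ℝ) (x : ℕ → Fin (n + 1) → ℝ)
    (t : ℕ) (i : Fin (n + 1)) : ℝ :=
  sInf (x t '' {j | |x t j - x t i| ≤ V})

/-- Position of the farthest right robot visible from robot `i` at time `t`
(visibility radius `V`). -/
noncomputable def rpos {n : ℕ} (V : ℝ) (x : ℕ → Fin (n + 1) → ℝ)
    (t : ℕ) (i : Fin (n + 1)) : ℝ :=
  sSup (x t '' {j | |x t j - x t i| ≤ V})

theorem lpos_congr' {n : ℕ} (V : ℝ) (x : ℕ → Fin (n + 1) → ℝ) (t : ℕ) (i j : Fin (n + 1))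
    (h : x t i = x t j) : lpos V x t i = lpos V x t j := by
  unfold lpos; rw [h]

theorem rpos_congr' {n : ℕ} (V : ℝ) (x : ℕ → Fin (n + 1) → ℝ) (t : ℕ) (i j : Fin (n + 1))
    (h : x t i = x t j) : rpos V x t i = rpos V x t j := by
  unfold rpos; rw [h]

theorem le_rpos' {n : ℕ} (V : ℝ) (hV : 0 < V) (x : ℕ → Fin (n + 1) → ℝ) (t : ℕ)
    (i : Fin (n + 1)) : x t i ≤ rpos V x t i := by
  unfold rpos
  apply le_csSup (Set.toFinite _).bddAbove
  exact ⟨i, by simp [hV.le], rfl⟩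

theorem chain_agree {n : ℕ} (V : ℝ) (x : ℕ → Fin (n + 1) → ℝ) (t k m : ℕ)
    (c c' : ℕ → Fin (n + 1)) (h0 : c 0 = c' 0)
    (h : ∀ j, j < k → rpos V x t (c j) = x t (c (j + 1)))
    (h' : ∀ j, j < m → rpos V x t (c' j) = x t (c' (j + 1))) :
    ∀ j, j ≤ k → j ≤ m → x t (c j) = x t (c' j) := by
  intro j
  induction j with
  | zero => intros; rw [h0]
  | succ j ih =>
    intro h1 h2
    rw [← h j h1, ← h' j h2]
    exact rpos_congr' V x t _ _ (ih (by omega) (by omega))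

theorem chain_not_lt {n : ℕ} (V : ℝ) (hV : 0 < V) (x : ℕ → Fin (n + 1) → ℝ) (t k m : ℕ)
    (hk : 1 ≤ k) (c c' : ℕ → Fin (n + 1)) (h0 : c 0 = c' 0) (he : c k = c' m)
    (hne : x t (c 0) ≠ x t (c k))
    (h : ∀ j, j < k → rpos V x t (c j) = x t (c (j + 1)) ∧ lpos V x t (c (j + 1)) = x t (c j))
    (h' : ∀ j, j < m → rpos V x t (c' j) = x t (c' (j + 1)) ∧
      lpos V x t (c' (j + 1)) = x t (c' j)) : ¬ k < m := by
  intro hkm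
  have hag := chain_agree V x t k m c c' h0 (fun j hj => (h j hj).1) (fun j hj => (h' j hj).1)
    k le_rfl hkm.le
  have mono : ∀ d, k + 1 + d ≤ m → x t (c' (k + 1)) ≤ x t (c' (k + 1 + d)) := by
    intro d
    induction d with
    | zero => intro _; exact le_rfl
    | succ d ih =>
      intro hd
      have h1 := le_rpos' V hV x t (c' (k + 1 + d))
      rw [(h' (k + 1 + d) (by omega)).1] at h1
      exact (ih (by omega)).trans h1
  have h1 := mono (m - (k + 1)) (by omega)
  rw [show k + 1 + (m - (k + 1)) = m by omega, ← he] at h1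
  have h2 := le_rpos' V hV x t (c' k)
  rw [(h' k hkm).1] at h2
  have h3 : x t (c' (k + 1)) = x t (c k) := by linarith
  have hl : lpos V x t (c k) = x t (c k) := by
    rw [← lpos_congr' V x t _ _ h3, (h' k hkm).2, hag]
  have down : ∀ d, d ≤ k → x t (c (k - d)) = x t (c k) := by
    intro d
    induction d with
    | zero => intro _; rfl
    | succ d ih =>
      intro hd
      have h4 := (h (k - (d + 1)) (by omega)).2
      rw [show k - (d + 1) + 1 = k - d by omega,
        lpos_congr' V x t _ _ (ih (by omega)), hl] at h4
      exact h4.symm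
  have h5 := down k le_rfl
  rw [Nat.sub_self] at h5
  exact hne h5

/-- (Uniqueness of the Primary Chain) Two mutual chains connecting the left
faulty robot to the right faulty robot have the same length and occupy the
same positions at all times. -/
theorem primary_chain_unique
    (n : ℕ) (hn : 2 ≤ n) (V D : ℝ) (hV : 0 < V) (hD : 0 < D)
    (x : ℕ → Fin (n + 1) → ℝ)
    (hfault0 : ∀ t : ℕ, x t 0 = 0)
    (hfaultn : ∀ t : ℕ, x t (Fin.last n) = D)
    (hupd : ∀ t : ℕ, ∀ i : Fin (n + 1), i ≠ 0 → i ≠ Fin.last n →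
      x (t + 1) i = (lpos V x t i + rpos V x t i) / 2)
    (t₀ : ℕ) (k m : ℕ) (hk : 1 ≤ k) (hm : 1 ≤ m)
    (c c' : ℕ → Fin (n + 1))
    (hc0 : c 0 = 0) (hck : c k = Fin.last n)
    (hc'0 : c' 0 = 0) (hc'm : c' m = Fin.last n)
    (hchain : ∀ t : ℕ, t₀ ≤ t → ∀ j : ℕ, j < k →
      rpos V x t (c j) = x t (c (j + 1)) ∧
      lpos V x t (c (j + 1)) = x t (c j))
    (hchain' : ∀ t : ℕ, t₀ ≤ t → ∀ j : ℕ, j < m →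
      rpos V x t (c' j) = x t (c' (j + 1)) ∧
      lpos V x t (c' (j + 1)) = x t (c' j)) :
    k = m ∧ ∀ t : ℕ, t₀ ≤ t → ∀ j : ℕ, j ≤ k → x t (c j) = x t (c' j) := by
  have hne : ∀ t, x t (0 : Fin (n + 1)) ≠ x t (Fin.last n) := by
    intro t; rw [hfault0, hfaultn]; exact hD.ne
  have h1 : ¬ k < m := chain_not_lt V hV x t₀ k m hk c c' (by rw [hc0, hc'0])
    (by rw [hck, hc'm]) (by rw [hc0, hck]; exact hne _) (hchain t₀ le_rfl) (hchain' t₀ le_rfl)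
  have h2 : ¬ m < k := chain_not_lt V hV x t₀ m k hm c' c (by rw [hc0, hc'0])
    (by rw [hck, hc'm]) (by rw [hc'0, hc'm]; exact hne _) (hchain' t₀ le_rfl) (hchain t₀ le_rfl)
  have hkm : k = m := by omega
  refine ⟨hkm, fun t ht j hj => ?_⟩
  exact chain_agree V x t k m c c' (by rw [hc0, hc'0]) (fun j hj => (hchain t ht j hj).1)
    (fun j hj => (hchain' t ht j hj).1) j hj (by omega)
end

section
/- (Global Convergence) In the robot model on a line with two faulty robots, assume the visibility graph at time 0 is connected. Then for every robot i the sequence of positions t ↦ x t i converges to a limit in ℝ as t → ∞; in particular |x (t+1) i − x t i| → 0 for every i, and the whole configuration converges towards a fixed limit configuration. -/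
open Filter Topology

/-- comparison principle for discrete infinity harmonic functions -/
lemma aux_compare {ι : Type} [Fintype ι] (N : ι → Finset ι) (hN : ∀ i, (N i).Nonempty)
    (B : ι → Prop)
    (hc : ∀ i, ∃ b, B b ∧ Relation.ReflTransGen (fun a b => b ∈ N a) i b)
    (u v : ι → ℝ) (hB : ∀ b, B b → u b ≤ v b)
    (hu : ∀ i, ¬ B i → u i = ((N i).inf' (hN i) u + (N i).sup' (hN i) u) / 2)
    (hv : ∀ i, ¬ B i → v i = ((N i).inf' (hN i) v + (N i).sup' (hN i) v) / 2) :
    ∀ i, u i ≤ v i := by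
  classical
  intro i0
  by_contra hlt
  push Not at hlt
  obtain ⟨m, -, hm⟩ := Finset.exists_max_image Finset.univ (fun i => u i - v i) ⟨i0, Finset.mem_univ _⟩
  have hpos : 0 < u m - v m := by
    have := hm i0 (Finset.mem_univ _); linarith
  obtain ⟨δ, hδ⟩ : ∃ δ, δ = u m - v m := ⟨_, rfl⟩
  have hm' : ∀ i, u i - v i ≤ δ := fun i => by
    have := hm i (Finset.mem_univ _); linarith
  obtain ⟨k, hk, hkmax⟩ := Finset.exists_max_image (Finset.univ.filter (fun i => u i - v i = δ)) u
    ⟨m, by simp [hδ]⟩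
  have hkδ : u k - v k = δ := by simpa using hk
  have hkm : ∀ j, u j - v j = δ → u j ≤ u k := fun j hj => hkmax j (by simpa using hj)
  have key : ∀ i, u i - v i = δ → u i = u k → ∀ j ∈ N i, u j - v j = δ ∧ u j = u k := by
    intro i hi hik
    have hiB : ¬ B i := fun h => by have := hB i h; linarith
    have h1 := hu i hiB
    have h2 := hv i hiB
    obtain ⟨a, ha, hae⟩ := Finset.exists_mem_eq_sup' (hN i) u
    obtain ⟨b, hb, hbe⟩ := Finset.exists_mem_eq_inf' (hN i) v
    have hlu : ∀ j ∈ N i, (N i).inf' (hN i) u ≤ u j := fun j hj => Finset.inf'_le u hj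
    have hru : ∀ j ∈ N i, u j ≤ (N i).sup' (hN i) u := fun j hj => Finset.le_sup' u hj
    have hlv : ∀ j ∈ N i, (N i).inf' (hN i) v ≤ v j := fun j hj => Finset.inf'_le v hj
    have hrv : ∀ j ∈ N i, v j ≤ (N i).sup' (hN i) v := fun j hj => Finset.le_sup' v hj
    have e1 := hm' a
    have e2 := hm' b
    have e3 := hrv a ha
    have e4 := hlu b hb
    have haδ : u a - v a = δ := by linarith
    have e5 := hkm a haδ
    intro j hj
    have f1 := hlu j hj
    have f2 := hru j hj
    have f3 := hlv j hj
    have f4 := hrv j hj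
    constructor <;> linarith
  obtain ⟨b, hb, hp⟩ := hc k
  have : u b - v b = δ ∧ u b = u k := by
    clear hb
    induction hp with
    | refl => exact ⟨hkδ, rfl⟩
    | tail _ h ih => exact key _ (ih).1 (ih).2 _ h
  have := hB b hb
  linarith

open Classical in
/-- one step of value iteration -/
noncomputable def stepF {ι : Type} (N : ι → Finset ι) (hN : ∀ i, (N i).Nonempty)
    (B : ι → Prop) (g : ι → ℝ) (y : ι → ℝ) (i : ι) : ℝ :=
  if B i then g i else ((N i).inf' (hN i) y + (N i).sup' (hN i) y) / 2

lemma stepF_mono {ι : Type} (N : ι → Finset ι) (hN : ∀ i, (N i).Nonempty)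
    (B : ι → Prop) (g : ι → ℝ) : Monotone (stepF N hN B g) := by
  intro y z h i
  unfold stepF
  split_ifs
  · exact le_rfl
  · have h1 : (N i).inf' (hN i) y ≤ (N i).inf' (hN i) z :=
      Finset.le_inf' _ _ fun j hj => (Finset.inf'_le y hj).trans (h j)
    have h2 : (N i).sup' (hN i) y ≤ (N i).sup' (hN i) z :=
      Finset.sup'_le _ _ fun j hj => (h j).trans (Finset.le_sup' z hj)
    linarith

lemma stepF_tendsto {ι : Type} (N : ι → Finset ι) (hN : ∀ i, (N i).Nonempty)
    (B : ι → Prop) (g : ι → ℝ) (y : ℕ → ι → ℝ) (l : ι → ℝ)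
    (h : ∀ i, Tendsto (fun t => y t i) atTop (𝓝 (l i)))
    (hs : ∀ t, y (t + 1) = stepF N hN B g (y t)) : stepF N hN B g l = l := by
  funext i
  have h1 : Tendsto (fun t => y (t + 1) i) atTop (𝓝 (l i)) := (tendsto_add_atTop_iff_nat 1).2 (h i)
  refine tendsto_nhds_unique ?_ h1
  simp only [hs]
  unfold stepF
  split_ifs
  · exact tendsto_const_nhds
  · refine Tendsto.div_const (Tendsto.add ?_ ?_) 2
    · exact Filter.Tendsto.finset_inf'_nhds_apply (hN i) (fun j _ => h j)
    · exact Filter.Tendsto.finset_sup'_nhds_apply (hN i) (fun j _ => h j)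

lemma stepF_conv {ι : Type} [Fintype ι] (N : ι → Finset ι) (hN : ∀ i, (N i).Nonempty)
    (B : ι → Prop) (g : ι → ℝ)
    (hc : ∀ i, ∃ b, B b ∧ Relation.ReflTransGen (fun a b => b ∈ N a) i b)
    (x : ℕ → ι → ℝ) (hx : ∀ t, x (t + 1) = stepF N hN B g (x t)) (i : ι) :
    ∃ L : ℝ, Tendsto (fun t => x t i) atTop (𝓝 L) := by
  obtain ⟨M, hM⟩ : ∃ M : ℝ, ∀ i, |x 0 i| + |g i| ≤ M := by
    obtain ⟨M, hM⟩ := (Set.finite_range (fun i => |x 0 i| + |g i|)).bddAbove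
    exact ⟨M, fun i => hM ⟨i, rfl⟩⟩
  have hb : ∀ i, -M ≤ x 0 i ∧ x 0 i ≤ M ∧ -M ≤ g i ∧ g i ≤ M := fun i => by
    have := hM i
    have := abs_nonneg (x 0 i)
    have := abs_nonneg (g i)
    have := le_abs_self (x 0 i)
    have := neg_abs_le (x 0 i)
    have := le_abs_self (g i)
    have := neg_abs_le (g i)
    refine ⟨?_, ?_, ?_, ?_⟩ <;> linarith
  set F := stepF N hN B g with hF
  have hmono : Monotone F := stepF_mono N hN B g
  let U : ι → ℝ := fun _ => M
  let W : ι → ℝ := fun _ => -M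
  have hU : F U ≤ U := by
    intro i
    simp only [hF, stepF, U]
    split_ifs
    · exact (hb i).2.2.2
    · simp
  have hW : W ≤ F W := by
    intro i
    simp only [hF, stepF, W]
    split_ifs
    · exact (hb i).2.2.1
    · simp
  have hxit : ∀ t, x t = F^[t] (x 0) := by
    intro t
    induction t with
    | zero => rfl
    | succ t ih => rw [hx, ih, Function.iterate_succ_apply']
  have hWU : W ≤ U := fun i => (hb i).1.trans (hb i).2.1
  have hWx : ∀ t, F^[t] W ≤ x t := fun t => by
    rw [hxit]; exact hmono.iterate t (fun i => (hb i).1)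
  have hxU : ∀ t, x t ≤ F^[t] U := fun t => by
    rw [hxit]; exact hmono.iterate t (fun i => (hb i).2.1)
  have hUa : Antitone (fun t => F^[t] U) := hmono.antitone_iterate_of_map_le hU
  have hWm : Monotone (fun t => F^[t] W) := hmono.monotone_iterate_of_le_map hW
  have hUl : ∀ i, ∃ l, Tendsto (fun t => (F^[t] U) i) atTop (𝓝 l) := fun i =>
    ⟨_, tendsto_atTop_ciInf (fun a b h => hUa h i) ⟨W i, by
      rintro _ ⟨t, rfl⟩
      exact (hWm (Nat.zero_le t) i).trans ((hWx t i).trans (hxU t i))⟩⟩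
  have hWl : ∀ i, ∃ l, Tendsto (fun t => (F^[t] W) i) atTop (𝓝 l) := fun i =>
    ⟨_, tendsto_atTop_ciSup (fun a b h => hWm h i) ⟨U i, by
      rintro _ ⟨t, rfl⟩
      exact ((hWx t i).trans (hxU t i)).trans (hUa (Nat.zero_le t) i)⟩⟩
  choose u hu using hUl
  choose w hw using hWl
  have hfu : F u = u := stepF_tendsto N hN B g (fun t => F^[t] U) u hu
    (fun t => Function.iterate_succ_apply' _ _ _)
  have hfw : F w = w := stepF_tendsto N hN B g (fun t => F^[t] W) w hw
    (fun t => Function.iterate_succ_apply' _ _ _)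
  have hle : ∀ i, u i ≤ w i := by
    refine aux_compare N hN B hc u w ?_ ?_ ?_
    · intro b hb
      rw [← hfu, ← hfw]
      simp [hF, stepF, hb]
    · intro i hi
      conv_lhs => rw [← hfu]
      simp [hF, stepF, hi]
    · intro i hi
      conv_lhs => rw [← hfw]
      simp [hF, stepF, hi]
  have hge : w i ≤ u i := le_of_tendsto_of_tendsto' (hw i) (hu i)
    (fun t => (hWx t i).trans (hxU t i))
  have heq : w i = u i := le_antisymm hge (hle i)
  refine ⟨u i, tendsto_of_tendsto_of_tendsto_of_le_of_le (heq ▸ hw i) (hu i) ?_ ?_⟩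
  · exact fun t => hWx t i
  · exact fun t => hxU t i

lemma pos_bounds {n : ℕ} (V : ℝ) (x : ℕ → Fin (n + 1) → ℝ) (t : ℕ) (i j : Fin (n + 1))
    (h : |x t j - x t i| ≤ V) :
    lpos V x t i ≤ x t j ∧ x t i - V ≤ lpos V x t i ∧
      x t j ≤ rpos V x t i ∧ rpos V x t i ≤ x t i + V := by
  have hfin : (x t '' {j | |x t j - x t i| ≤ V}).Finite := Set.toFinite _
  have hmem : x t j ∈ x t '' {j | |x t j - x t i| ≤ V} := ⟨j, h, rfl⟩
  refine ⟨csInf_le hfin.bddBelow hmem, le_csInf ⟨_, hmem⟩ ?_, le_csSup hfin.bddAbove hmem,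
    csSup_le ⟨_, hmem⟩ ?_⟩
  · rintro _ ⟨k, hk, rfl⟩
    have hk : |x t k - x t i| ≤ V := hk
    have := (abs_le.1 hk).1
    linarith
  · rintro _ ⟨k, hk, rfl⟩
    have hk : |x t k - x t i| ≤ V := hk
    have := (abs_le.1 hk).2
    linarith

/-- (Global Convergence) With two faulty robots, every robot's position
converges to a limit; in particular one-step displacements tend to `0`. -/
theorem global_convergence
    (n : ℕ) (hn : 2 ≤ n) (V D : ℝ) (hV : 0 < V) (hD : 0 < D)
    (x : ℕ → Fin (n + 1) → ℝ)
    (hfault0 : ∀ t : ℕ, x t 0 = 0)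
    (hfaultn : ∀ t : ℕ, x t (Fin.last n) = D)
    (hupd : ∀ t : ℕ, ∀ i : Fin (n + 1), i ≠ 0 → i ≠ Fin.last n →
      x (t + 1) i = (lpos V x t i + rpos V x t i) / 2)
    (hconn : ∀ i j : Fin (n + 1),
      Relation.ReflTransGen (fun a b : Fin (n + 1) => |x 0 a - x 0 b| ≤ V) i j)
    : ∀ i : Fin (n + 1),
      (∃ L : ℝ, Tendsto (fun t => x t i) atTop (nhds L)) ∧
      Tendsto (fun t => |x (t + 1) i - x t i|) atTop (nhds 0) := by
  classical
  have hself : ∀ t i, |x t i - x t i| ≤ V := fun t i => by simp [hV.le]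
  have hstep : ∀ t i, x (t + 1) i = x t i ∨ x (t + 1) i = (lpos V x t i + rpos V x t i) / 2 := by
    intro t i
    by_cases h0 : i = 0
    · left; rw [h0, hfault0, hfault0]
    by_cases h1 : i = Fin.last n
    · left; rw [h1, hfaultn, hfaultn]
    exact Or.inr (hupd t i h0 h1)
  have hpres : ∀ t i j, |x t j - x t i| ≤ V → |x (t + 1) j - x (t + 1) i| ≤ V := by
    intro t i j h
    have h' : |x t i - x t j| ≤ V := by rwa [abs_sub_comm]
    obtain ⟨a1, a2, a3, a4⟩ := pos_bounds V x t i j h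
    obtain ⟨b1, -, b3, -⟩ := pos_bounds V x t i i (hself t i)
    obtain ⟨c1, c2, c3, c4⟩ := pos_bounds V x t j i h'
    obtain ⟨d1, -, d3, -⟩ := pos_bounds V x t j j (hself t j)
    obtain ⟨e1, e2⟩ := abs_le.1 h
    rw [abs_le]
    rcases hstep t i with hi | hi <;> rcases hstep t j with hj | hj <;> rw [hi, hj] <;>
      constructor <;> linarith
  have hpres' : ∀ s t i j, s ≤ t → |x s j - x s i| ≤ V → |x t j - x t i| ≤ V := by
    intro s t i j hst h
    induction t, hst using Nat.le_induction with
    | base => exact h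
    | succ t _ ih => exact hpres t i j ih
  let G : Fin (n + 1) → Fin (n + 1) → Prop := fun i j => ∃ s, |x s j - x s i| ≤ V
  have hG : ∀ᶠ t in atTop, ∀ i j, (|x t j - x t i| ≤ V ↔ G i j) := by
    refine eventually_all.2 fun i => eventually_all.2 fun j => ?_
    by_cases h : G i j
    · obtain ⟨s, hs⟩ := id h
      filter_upwards [eventually_ge_atTop s] with t ht
      exact ⟨fun _ => h, fun _ => hpres' s t i j ht hs⟩
    · exact Eventually.of_forall fun t => ⟨fun h' => ⟨t, h'⟩, fun h' => absurd h' h⟩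
  obtain ⟨T, hT⟩ := eventually_atTop.1 hG
  let N : Fin (n + 1) → Finset (Fin (n + 1)) := fun i => Finset.univ.filter (fun j => G i j)
  have hN : ∀ i, (N i).Nonempty := fun i => ⟨i, by simpa [N] using ⟨0, hself 0 i⟩⟩
  let B : Fin (n + 1) → Prop := fun i => i = 0 ∨ i = Fin.last n
  have hc : ∀ i, ∃ b, B b ∧ Relation.ReflTransGen (fun a b => b ∈ N a) i b := fun i =>
    ⟨0, Or.inl rfl, by
      refine Relation.ReflTransGen.mono ?_ _ _ (hconn i 0)
      intro a b hab
      simpa [N] using (⟨0, by rwa [abs_sub_comm]⟩ : G a b)⟩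
  have hx : ∀ t, x (T + (t + 1)) = stepF N hN B (x T) (x (T + t)) := by
    intro t
    funext i
    unfold stepF
    split_ifs with hi
    · rcases hi with rfl | rfl
      · rw [hfault0, hfault0]
      · rw [hfaultn, hfaultn]
    · simp only [B, not_or] at hi
      rw [← add_assoc, hupd _ _ hi.1 hi.2, Finset.inf'_eq_csInf_image, Finset.sup'_eq_csSup_image]
      have : {j | |x (T + t) j - x (T + t) i| ≤ V} = (N i : Set (Fin (n + 1))) := by
        ext j
        simp [N, hT (T + t) (Nat.le_add_right _ _) i j]
      rw [lpos, rpos, this]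
  intro i
  obtain ⟨L, hL⟩ := stepF_conv N hN B (x T) hc (fun t => x (T + t)) hx i
  have hL' : Tendsto (fun t => x t i) atTop (𝓝 L) := by
    rw [← tendsto_add_atTop_iff_nat T]
    simpa only [add_comm] using hL
  refine ⟨⟨L, hL'⟩, ?_⟩
  have := (((tendsto_add_atTop_iff_nat 1).2 hL').sub hL').abs
  simpa using this
end
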